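/- arXiv:2512.02903 — 3 statements merged into one kernel-verified Lean document; each statement's English description precedes it below -/
import Mathlib

section
/- For each index i ∈ {1,2,3}, the Poisson bracket of the energy with the i-th component of the Laplace–Runge–Lenz vector vanishes identically: {E, A_i}(r,v) = 0 for all (r,v) with r ≠ 0. -/
/-!
By the triple product identity, `A = ‖v‖² r - ⟪r, v⟫ v - κ r / ‖r‖`, which makes sense in every real
inner product space. Since `∇_v E = v` and `∇_r E = κ r / ‖r‖³`, the bracket `{E, A}` is the
derivative of `A` in `v` along `κ r / ‖r‖³` minus its derivative in `r` along `v`. Both equal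
`κ (⟪r, v⟫ r / ‖r‖³ - v / ‖r‖)`.
-/

noncomputable section

/-- Physical 3-space. -/
abbrev E3 : Type := EuclideanSpace ℝ (Fin 3)

/-- Build a vector in `E3` from its components. -/
def toE3 (f : Fin 3 → ℝ) : E3 := (EuclideanSpace.equiv (Fin 3) ℝ).symm f

/-- Cross product in `ℝ³`. -/
def cross (a b : E3) : E3 :=
  toE3 ![a 1 * b 2 - a 2 * b 1, a 2 * b 0 - a 0 * b 2, a 0 * b 1 - a 1 * b 0]

/-- Dot product in `ℝ³`. -/
def dot (a b : E3) : ℝ := ∑ i, a i * b i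

/-- Gradient in the `r` variable of a function on phase space. -/
def gradR (F : E3 × E3 → ℝ) (p : E3 × E3) : E3 := gradient (fun x => F (x, p.2)) p.1

/-- Gradient in the `v` variable of a function on phase space. -/
def gradV (F : E3 × E3 → ℝ) (p : E3 × E3) : E3 := gradient (fun y => F (p.1, y)) p.2

/-- Poisson bracket of two functions on phase space. -/
def pb (F G : E3 × E3 → ℝ) (p : E3 × E3) : ℝ :=
  dot (gradR F p) (gradV G p) - dot (gradR G p) (gradV F p)

/-- Energy `E(r,v) = (1/2)‖v‖² − κ/‖r‖`. -/
def energy (κ : ℝ) (p : E3 × E3) : ℝ := (1/2) * ‖p.2‖^2 - κ / ‖p.1‖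

/-- Angular momentum `L(r,v) = r × v`. -/
def angMom (p : E3 × E3) : E3 := cross p.1 p.2

/-- Laplace–Runge–Lenz vector `A(r,v) = v × L − κ r/‖r‖`. -/
def lrl (κ : ℝ) (p : E3 × E3) : E3 := cross p.2 (angMom p) - (κ / ‖p.1‖) • p.1

/-- LRL direction vector `Θ = A/‖A‖`. -/
def lrlDir (κ : ℝ) (p : E3 × E3) : E3 := ‖lrl κ p‖⁻¹ • lrl κ p

/-- Levi-Civita symbol `ε_{ijk}` on indices in `{0,1,2}`. -/
def eps (i j k : Fin 3) : ℝ :=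
  (((j : ℕ) : ℝ) - ((i : ℕ) : ℝ)) * (((k : ℕ) : ℝ) - ((i : ℕ) : ℝ))
    * (((k : ℕ) : ℝ) - ((j : ℕ) : ℝ)) / 2

open InnerProductSpace

section HilbertSpace

variable {E : Type*} [NormedAddCommGroup E] [InnerProductSpace ℝ E]

/-- The Kepler energy on the phase space of an arbitrary real inner product space. Points of phase
space are pairs (position, velocity), as in `energy`. -/
def keplerEnergy (κ : ℝ) (p : E × E) : ℝ := (1 / 2) * ‖p.2‖ ^ 2 - κ / ‖p.1‖

/-- The Laplace–Runge–Lenz vector on the phase space of an arbitrary real inner product space.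
The cross products of `lrl` are eliminated by `v × (r × v) = ‖v‖² r - ⟪r, v⟫ v`. -/
def lrlVector (κ : ℝ) (p : E × E) : E :=
  ‖p.2‖ ^ 2 • p.1 - ⟪p.1, p.2⟫_ℝ • p.2 - (κ / ‖p.1‖) • p.1

lemma hasFDerivAt_inv_norm {r : E} (hr : r ≠ 0) :
    HasFDerivAt (fun x : E => ‖x‖⁻¹) (-(‖r‖ ^ 3)⁻¹ • innerSL ℝ r) r := by
  have hnorm : ‖r‖ ≠ 0 := norm_ne_zero_iff.mpr hr
  have hsqrt := (hasStrictFDerivAt_norm_sq r).hasFDerivAt.sqrt (pow_ne_zero 2 hnorm)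
  simp only [Real.sqrt_sq (norm_nonneg _)] at hsqrt
  refine ((hasDerivAt_inv hnorm).comp_hasFDerivAt r hsqrt).congr_fderiv ?_
  match_scalars
  field_simp

lemma hasFDerivAt_lrlVector_position (κ : ℝ) {r : E} (hr : r ≠ 0) (v : E) :
    HasFDerivAt (fun x => lrlVector κ (x, v))
      (‖v‖ ^ 2 • .id ℝ E - (innerSL ℝ v).smulRight v
        - κ • (‖r‖⁻¹ • .id ℝ E - (‖r‖ ^ 3)⁻¹ • (innerSL ℝ r).smulRight r)) r := by
  have hid := hasFDerivAt_id (𝕜 := ℝ) r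
  have hinner := (hid.inner ℝ (hasFDerivAt_const v r)).smul_const v
  have hradial := ((hasFDerivAt_inv_norm hr).const_mul κ).smul hid
  refine (((hid.const_smul (‖v‖ ^ 2)).sub hinner).sub hradial).congr_fderiv ?_
  ext w
  simp only [id_eq, sub_apply, add_apply, smul_apply, neg_smul, neg_apply, zero_apply,
    ContinuousLinearMap.id_apply, ContinuousLinearMap.smulRight_apply,
    ContinuousLinearMap.comp_apply, ContinuousLinearMap.prod_apply, fderivInnerCLM_apply,
    coe_innerSL_apply, inner_zero_right, zero_add, real_inner_comm, smul_eq_mul]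
  module

lemma hasFDerivAt_lrlVector_velocity (κ : ℝ) (r v : E) :
    HasFDerivAt (fun y => lrlVector κ (r, y))
      ((2 • innerSL ℝ v).smulRight r - ⟪r, v⟫_ℝ • .id ℝ E - (innerSL ℝ r).smulRight v) v := by
  have hkinetic := (hasStrictFDerivAt_norm_sq v).hasFDerivAt.smul_const r
  have hinner := (innerSL ℝ r).hasFDerivAt.smul (hasFDerivAt_id (𝕜 := ℝ) v)
  refine ((hkinetic.sub hinner).sub_const ((κ / ‖r‖) • r)).congr_fderiv ?_
  rw [sub_sub]
  rfl

lemma fderiv_lrlVector_position_apply_velocity (κ : ℝ) {r : E} (hr : r ≠ 0) (v : E) :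
    fderiv ℝ (fun x => lrlVector κ (x, v)) r v =
      κ • ((⟪r, v⟫_ℝ / ‖r‖ ^ 3) • r - ‖r‖⁻¹ • v) := by
  simp only [(hasFDerivAt_lrlVector_position κ hr v).fderiv, sub_apply, smul_apply,
    ContinuousLinearMap.id_apply, ContinuousLinearMap.smulRight_apply, coe_innerSL_apply,
    real_inner_self_eq_norm_sq]
  module

lemma fderiv_lrlVector_velocity_apply_position (κ : ℝ) {r : E} (hr : r ≠ 0) (v : E) :
    fderiv ℝ (fun y => lrlVector κ (r, y)) v ((κ / ‖r‖ ^ 3) • r) =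
      κ • ((⟪r, v⟫_ℝ / ‖r‖ ^ 3) • r - ‖r‖⁻¹ • v) := by
  have hnorm : ‖r‖ ≠ 0 := norm_ne_zero_iff.mpr hr
  simp only [(hasFDerivAt_lrlVector_velocity κ r v).fderiv, map_smul, sub_apply, smul_apply,
    ContinuousLinearMap.id_apply, ContinuousLinearMap.smulRight_apply, coe_innerSL_apply,
    real_inner_self_eq_norm_sq, real_inner_comm r v]
  match_scalars <;> field_simp
  ring

variable [CompleteSpace E]

/-- The canonical Poisson bracket on the phase space of a real Hilbert space. It is meaningful only
for differentiable `F` and `G`, since `gradient` is `0` at points of non-differentiability. -/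
def poissonBracket (F G : E × E → ℝ) (p : E × E) : ℝ :=
  ⟪gradient (fun x => F (x, p.2)) p.1, gradient (fun y => G (p.1, y)) p.2⟫_ℝ
    - ⟪gradient (fun x => G (x, p.2)) p.1, gradient (fun y => F (p.1, y)) p.2⟫_ℝ

lemma poissonBracket_eq_apply_gradient_sub {F G : E × E → ℝ} {r v Fr Fv : E} {Gr Gv : E →L[ℝ] ℝ}
    (hFr : HasGradientAt (fun x => F (x, v)) Fr r) (hFv : HasGradientAt (fun y => F (r, y)) Fv v)
    (hGr : HasFDerivAt (fun x => G (x, v)) Gr r) (hGv : HasFDerivAt (fun y => G (r, y)) Gv v) :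
    poissonBracket F G (r, v) = Gv Fr - Gr Fv := by
  rw [poissonBracket, hFr.gradient, hFv.gradient, real_inner_comm, inner_gradient_left,
    inner_gradient_left, hGv.fderiv, hGr.fderiv]

lemma hasGradientAt_keplerEnergy_position (κ : ℝ) {r : E} (hr : r ≠ 0) (v : E) :
    HasGradientAt (fun x => keplerEnergy κ (x, v)) ((κ / ‖r‖ ^ 3) • r) r := by
  rw [hasGradientAt_iff_hasFDerivAt]
  refine (((hasFDerivAt_inv_norm hr).const_mul κ).const_sub (1 / 2 * ‖v‖ ^ 2)).congr_fderiv ?_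
  ext w
  simp [div_eq_mul_inv, mul_assoc]

lemma hasGradientAt_keplerEnergy_velocity (κ : ℝ) (r v : E) :
    HasGradientAt (fun y => keplerEnergy κ (r, y)) v v := by
  rw [hasGradientAt_iff_hasFDerivAt]
  refine (((hasStrictFDerivAt_norm_sq v).hasFDerivAt.const_mul (1 / 2)).sub_const
    (κ / ‖r‖)).congr_fderiv ?_
  ext w
  simp

theorem poisson_energy_lrl_general (κ : ℝ) (ℓ : E →L[ℝ] ℝ) {r : E} (hr : r ≠ 0) (v : E) :
    poissonBracket (keplerEnergy κ) (fun p => ℓ (lrlVector κ p)) (r, v) = 0 := by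
  have hposition := (hasFDerivAt_lrlVector_position κ hr v).differentiableAt.hasFDerivAt
  have hvelocity := (hasFDerivAt_lrlVector_velocity κ r v).differentiableAt.hasFDerivAt
  calc
    poissonBracket (keplerEnergy κ) (fun p => ℓ (lrlVector κ p)) (r, v)
      = ℓ (fderiv ℝ (fun y => lrlVector κ (r, y)) v ((κ / ‖r‖ ^ 3) • r))
          - ℓ (fderiv ℝ (fun x => lrlVector κ (x, v)) r v) :=
        poissonBracket_eq_apply_gradient_sub (Gr := ℓ ∘L _) (Gv := ℓ ∘L _)
          (hasGradientAt_keplerEnergy_position κ hr v) (hasGradientAt_keplerEnergy_velocity κ r v)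
          (ℓ.hasFDerivAt.comp r hposition) (ℓ.hasFDerivAt.comp v hvelocity)
    _ = 0 := by
        rw [fderiv_lrlVector_velocity_apply_position κ hr,
          fderiv_lrlVector_position_apply_velocity κ hr, sub_self]

end HilbertSpace

lemma dot_eq_inner (a b : E3) : dot a b = ⟪a, b⟫_ℝ := by
  simp only [dot, PiLp.inner_apply, RCLike.inner_apply, conj_trivial, mul_comm]

lemma cross_cross_eq_inner_smul_sub (a b c : E3) :
    cross a (cross b c) = ⟪a, c⟫_ℝ • b - ⟪a, b⟫_ℝ • c := by
  rw [real_inner_comm c a]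
  exact congrArg (WithLp.toLp 2) (cross_cross_eq_smul_sub_smul' a.ofLp b.ofLp c.ofLp)

lemma pb_eq_poissonBracket (F G : E3 × E3 → ℝ) : pb F G = poissonBracket F G := by
  ext p
  simp only [pb, gradR, gradV, dot_eq_inner, poissonBracket]

lemma energy_eq_keplerEnergy (κ : ℝ) : energy κ = keplerEnergy κ := rfl

lemma lrl_eq_lrlVector (κ : ℝ) : lrl κ = lrlVector κ := by
  ext1 p
  rw [lrl, angMom, cross_cross_eq_inner_smul_sub, real_inner_self_eq_norm_sq, real_inner_comm,
    lrlVector]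

/-- The Poisson bracket of the energy with each component of the LRL vector
vanishes: `{E, A_i}(r,v) = 0` for all `(r,v)` with `r ≠ 0`. -/
theorem poisson_energy_lrl (κ : ℝ) (hκ : 0 < κ) (i : Fin 3)
    (r v : E3) (hr : r ≠ 0) :
    pb (energy κ) (fun p => lrl κ p i) (r, v) = 0 := by
  rw [pb_eq_poissonBracket, energy_eq_keplerEnergy, lrl_eq_lrlVector]
  exact poisson_energy_lrl_general κ (EuclideanSpace.proj i) hr v
end
end

section
/- For every (r,v) ∈ ℝ³ × ℝ³ with r ≠ 0, the position and velocity vectors admit the following expansion in terms of the LRL vector A and the vector L × A: ‖A‖² r = ( ‖L‖² − κ‖r‖ ) A + (r · v) (L × A), and ‖A‖² v = −κ ‖r‖⁻¹ (r · v) A + ( ‖v‖² − κ ‖r‖⁻¹ ) (L × A). -/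
/-! For any vectors `A` and `x` of 3-space, the triple product expansion of `(A × x) × A` reads
`(A · A) x = (A · x) A + (A × x) × A`. For the Laplace–Runge–Lenz vector `A`, both `A × r` and
`A × v` are multiples of the angular momentum `L`, because `L` is orthogonal to `r` and to `v`;
hence `(A × x) × A` is a multiple of `L × A` for `x = r` and `x = v`. -/

noncomputable section

section CommRing

open Matrix

variable {R : Type*} [CommRing R]

/-- The Laplace–Runge–Lenz vector `v × (r × v) - μ r` over a commutative ring. The scalar `μ` is
free; it is `κ / ‖r‖` for the Kepler problem, see `ofLp_lrl`. -/
def lrlVec (μ : R) (r v : Fin 3 → R) : Fin 3 → R := v ⨯₃ (r ⨯₃ v) - μ • r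

theorem dotProduct_self_smul_eq_add_cross_cross (a x : Fin 3 → R) :
    (a ⬝ᵥ a) • x = (a ⬝ᵥ x) • a + a ⨯₃ x ⨯₃ a := by
  rw [cross_cross_eq_smul_sub_smul, dotProduct_comm x, add_sub_cancel]

theorem lrlVec_dotProduct_position (μ : R) (r v : Fin 3 → R) :
    lrlVec μ r v ⬝ᵥ r = r ⨯₃ v ⬝ᵥ r ⨯₃ v - μ * (r ⬝ᵥ r) := by
  rw [lrlVec, sub_dotProduct, smul_dotProduct, smul_eq_mul, dotProduct_comm _ r,
    triple_product_permutation, triple_product_permutation]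

theorem lrlVec_dotProduct_velocity (μ : R) (r v : Fin 3 → R) :
    lrlVec μ r v ⬝ᵥ v = -(μ * (r ⬝ᵥ v)) := by
  rw [lrlVec, sub_dotProduct, smul_dotProduct, smul_eq_mul, dotProduct_comm _ v, dot_self_cross,
    zero_sub]

theorem lrlVec_cross_position (μ : R) (r v : Fin 3 → R) :
    lrlVec μ r v ⨯₃ r = (r ⬝ᵥ v) • r ⨯₃ v := by
  rw [lrlVec, LinearMap.map_sub₂, LinearMap.map_smul₂, cross_self, cross_cross_eq_smul_sub_smul,
    dotProduct_comm (r ⨯₃ v), dot_self_cross, smul_zero, zero_smul, sub_zero, sub_zero,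
    dotProduct_comm]

theorem lrlVec_cross_velocity (μ : R) (r v : Fin 3 → R) :
    lrlVec μ r v ⨯₃ v = (v ⬝ᵥ v - μ) • r ⨯₃ v := by
  rw [lrlVec, LinearMap.map_sub₂, LinearMap.map_smul₂, cross_cross_eq_smul_sub_smul,
    dotProduct_comm (r ⨯₃ v), dot_cross_self, zero_smul, sub_zero, sub_smul]

theorem position_velocity_expansion_general (μ : R) (r v : Fin 3 → R) :
    (lrlVec μ r v ⬝ᵥ lrlVec μ r v) • r
        = (r ⨯₃ v ⬝ᵥ r ⨯₃ v - μ * (r ⬝ᵥ r)) • lrlVec μ r v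
          + (r ⬝ᵥ v) • (r ⨯₃ v ⨯₃ lrlVec μ r v) ∧
    (lrlVec μ r v ⬝ᵥ lrlVec μ r v) • v
        = (-(μ * (r ⬝ᵥ v))) • lrlVec μ r v
          + (v ⬝ᵥ v - μ) • (r ⨯₃ v ⨯₃ lrlVec μ r v) := by
  constructor
  · rw [dotProduct_self_smul_eq_add_cross_cross, lrlVec_dotProduct_position,
      lrlVec_cross_position, LinearMap.map_smul₂]
  · rw [dotProduct_self_smul_eq_add_cross_cross, lrlVec_dotProduct_velocity,
      lrlVec_cross_velocity, LinearMap.map_smul₂]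

end CommRing

section EuclideanSpace

open Matrix

theorem norm_sq_eq_dotProduct_self {ι : Type*} [Fintype ι] (a : EuclideanSpace ℝ ι) :
    ‖a‖ ^ 2 = a.ofLp ⬝ᵥ a.ofLp := by
  rw [← real_inner_self_eq_norm_sq, EuclideanSpace.inner_eq_star_dotProduct, star_trivial]

theorem dot_eq_dotProduct (a b : E3) : dot a b = a.ofLp ⬝ᵥ b.ofLp := rfl

theorem ofLp_cross (a b : E3) : (cross a b).ofLp = a.ofLp ⨯₃ b.ofLp := rfl

theorem ofLp_angMom (r v : E3) : (angMom (r, v)).ofLp = r.ofLp ⨯₃ v.ofLp := rfl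

theorem ofLp_lrl (κ : ℝ) (r v : E3) :
    (lrl κ (r, v)).ofLp = lrlVec (κ / ‖r‖) r.ofLp v.ofLp := rfl

end EuclideanSpace

/-- Expansion of position and velocity in the basis `{A, L × A}`:
`‖A‖² r = (‖L‖² − κ‖r‖) A + (r·v)(L × A)` and
`‖A‖² v = −κ‖r‖⁻¹(r·v) A + (‖v‖² − κ‖r‖⁻¹)(L × A)`. -/
theorem position_velocity_expansion (κ : ℝ) (hκ : 0 < κ)
    (r v : E3) (hr : r ≠ 0) :
    ‖lrl κ (r, v)‖^2 • r
        = (‖angMom (r, v)‖^2 - κ * ‖r‖) • lrl κ (r, v)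
          + (dot r v) • cross (angMom (r, v)) (lrl κ (r, v)) ∧
    ‖lrl κ (r, v)‖^2 • v
        = (-(κ * ‖r‖⁻¹ * dot r v)) • lrl κ (r, v)
          + (‖v‖^2 - κ * ‖r‖⁻¹) • cross (angMom (r, v)) (lrl κ (r, v)) := by
  have hr' : ‖r‖ ≠ 0 := norm_ne_zero_iff.mpr hr
  have coeff_eq : κ * ‖r‖ = κ / ‖r‖ * ‖r‖ ^ 2 := by field_simp
  rw [coeff_eq, ← div_eq_mul_inv, ← (WithLp.ofLp_injective 2).eq_iff,
    ← (WithLp.ofLp_injective 2).eq_iff]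
  simpa only [WithLp.ofLp_add, WithLp.ofLp_smul, norm_sq_eq_dotProduct_self, dot_eq_dotProduct,
    ofLp_cross, ofLp_angMom, ofLp_lrl]
    using position_velocity_expansion_general (κ / ‖r‖) r.ofLp v.ofLp
end
end

section
/- Let κ > 0, let E ∈ ℝ, ρ > 0, s ∈ {1, −1}, and let L₀, Θ₀ ∈ ℝ³ satisfy L₀ ≠ 0, ‖Θ₀‖ = 1, Θ₀ · L₀ = 0, 2ρ²E + 2κρ − ‖L₀‖² ≥ 0, and κ² + 2E‖L₀‖² > 0. Set a = √(κ² + 2E‖L₀‖²), B = √(2ρ²E + 2κρ − ‖L₀‖²), and define r* = a⁻¹ ( (‖L₀‖² − κρ) Θ₀ + s B (L₀ × Θ₀) ), v* = a⁻¹ ( −s κ B ρ⁻¹ Θ₀ + (2E + κ/ρ) (L₀ × Θ₀) ). Then ‖r*‖ = ρ, (1/2)‖v*‖² − κ/‖r*‖ = E, r* × v* = L₀, and v* × L₀ − κ r*/‖r*‖ = a Θ₀; that is, the point (r*, v*) has prescribed radius ρ, energy E, angular momentum L₀, LRL direction Θ₀, and LRL magnitude a. -/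
/-!
For a unit vector `Θ ⊥ L`, the vectors `Θ` and `W = L × Θ` span the orbital plane, with
`‖W‖ = ‖L‖`, `Θ × W = L`, `Θ × L = -W` and `W × L = ‖L‖² Θ`. In this frame the prescribed
quantities of the point become scalar identities between its coordinates, which all follow from
`a² = κ² + 2E‖L‖²` and `β² = 2ρ²E + 2κρ - ‖L‖²`, where `β = r · v`.
-/

noncomputable section

section CrossProduct

open scoped Matrix

lemma dot_eq_inner_s16 (u w : E3) : dot u w = inner ℝ u w := by
  simp [dot, PiLp.inner_apply, mul_comm]

lemma dot_self_eq_norm_sq (u : E3) : dot u u = ‖u‖ ^ 2 := by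
  rw [dot_eq_inner_s16, real_inner_self_eq_norm_sq]

lemma dot_comm (u w : E3) : dot u w = dot w u :=
  dotProduct_comm u.ofLp w.ofLp

lemma ofLp_cross_s16 (u w : E3) : (cross u w).ofLp = u.ofLp ⨯₃ w.ofLp := rfl

lemma neg_cross_eq_cross_swap (u w : E3) : -cross u w = cross w u :=
  WithLp.ofLp_injective 2 <| by simp [ofLp_cross_s16]

lemma cross_add_left (u v w : E3) : cross (u + v) w = cross u w + cross v w :=
  WithLp.ofLp_injective 2 <| by simp [ofLp_cross_s16]

lemma cross_smul_left (x : ℝ) (u w : E3) : cross (x • u) w = x • cross u w :=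
  WithLp.ofLp_injective 2 <| by simp [ofLp_cross_s16]

lemma cross_cross_eq_dot_smul_sub (u v w : E3) :
    cross (cross u v) w = dot u w • v - dot v w • u :=
  WithLp.ofLp_injective 2 <| cross_cross_eq_smul_sub_smul u.ofLp v.ofLp w.ofLp

lemma dot_cross_cross (u v w x : E3) :
    dot (cross u v) (cross w x) = dot u w * dot v x - dot u x * dot v w :=
  cross_dot_cross u.ofLp v.ofLp w.ofLp x.ofLp

lemma dot_cross_right_self (u w : E3) : dot w (cross u w) = 0 :=
  dot_cross_self u.ofLp w.ofLp

lemma cross_smul_add_smul (x y x' y' : ℝ) (u w : E3) :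
    cross (x • u + y • w) (x' • u + y' • w) = (x * y' - y * x') • cross u w := by
  apply WithLp.ofLp_injective 2
  have hwu : w.ofLp ⨯₃ u.ofLp = -(u.ofLp ⨯₃ w.ofLp) := (cross_anticomm _ _).symm
  simp only [ofLp_cross_s16, WithLp.ofLp_add, WithLp.ofLp_smul, map_add, map_smul,
    LinearMap.add_apply, LinearMap.smul_apply, cross_self, hwu]
  module

end CrossProduct

lemma norm_sq_smul_add_smul_of_inner_eq_zero {F : Type*} [NormedAddCommGroup F]
    [InnerProductSpace ℝ F] {u w : F} (h : inner ℝ u w = 0) (x y : ℝ) :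
    ‖x • u + y • w‖ ^ 2 = x ^ 2 * ‖u‖ ^ 2 + y ^ 2 * ‖w‖ ^ 2 := by
  rw [norm_add_sq_real, real_inner_smul_left, real_inner_smul_right, h, norm_smul, norm_smul,
    mul_pow, mul_pow, Real.norm_eq_abs, Real.norm_eq_abs, sq_abs, sq_abs]
  ring

section OrbitalFrame

variable {L Θ : E3}

lemma norm_sq_cross_of_dot_eq_zero (hperp : dot Θ L = 0) :
    ‖cross L Θ‖ ^ 2 = ‖L‖ ^ 2 * ‖Θ‖ ^ 2 := by
  rw [← dot_self_eq_norm_sq, dot_cross_cross, hperp, dot_self_eq_norm_sq, dot_self_eq_norm_sq,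
    mul_zero, sub_zero]

lemma cross_cross_left_of_dot_eq_zero (hperp : dot Θ L = 0) :
    cross (cross L Θ) L = ‖L‖ ^ 2 • Θ := by
  rw [cross_cross_eq_dot_smul_sub, hperp, dot_self_eq_norm_sq, zero_smul, sub_zero]

lemma cross_cross_right_of_dot_eq_zero (hperp : dot Θ L = 0) :
    cross Θ (cross L Θ) = ‖Θ‖ ^ 2 • L := by
  rw [← neg_cross_eq_cross_swap, cross_cross_eq_dot_smul_sub, dot_comm L Θ, hperp,
    dot_self_eq_norm_sq, zero_smul, zero_sub, neg_neg]

lemma norm_sq_smul_add_smul_cross (hΘ : ‖Θ‖ = 1) (hperp : dot Θ L = 0) (x y : ℝ) :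
    ‖x • Θ + y • cross L Θ‖ ^ 2 = x ^ 2 + y ^ 2 * ‖L‖ ^ 2 := by
  have hΘW : inner ℝ Θ (cross L Θ) = 0 := by rw [← dot_eq_inner_s16, dot_cross_right_self]
  rw [norm_sq_smul_add_smul_of_inner_eq_zero hΘW, norm_sq_cross_of_dot_eq_zero hperp, hΘ,
    one_pow, mul_one, mul_one]

lemma cross_smul_add_smul_cross_left (hperp : dot Θ L = 0) (x y : ℝ) :
    cross (x • Θ + y • cross L Θ) L = (y * ‖L‖ ^ 2) • Θ - x • cross L Θ := by
  rw [cross_add_left, cross_smul_left, cross_smul_left, cross_cross_left_of_dot_eq_zero hperp,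
    ← neg_cross_eq_cross_swap L Θ]
  module

end OrbitalFrame

/-- The phase-space point `(r, v)` reconstructed from radius `ρ`, energy `E`, angular momentum `L`
and LRL vector `a Θ`, where `a² = κ² + 2E‖L‖²`. The parameter `β` stands for `r · v`, a square root
of `2ρ²E + 2κρ - ‖L‖²` of either sign. -/
def reconstructedPoint (κ E ρ a β : ℝ) (L Θ : E3) : E3 × E3 :=
  (a⁻¹ • ((‖L‖ ^ 2 - κ * ρ) • Θ + β • cross L Θ),
    a⁻¹ • ((-(β * κ / ρ)) • Θ + (2 * E + κ / ρ) • cross L Θ))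

namespace reconstructedPoint

variable {κ E ρ a β : ℝ} {L Θ : E3}

lemma fst_eq : (reconstructedPoint κ E ρ a β L Θ).1 =
    (a⁻¹ * (‖L‖ ^ 2 - κ * ρ)) • Θ + (a⁻¹ * β) • cross L Θ := by
  simp only [reconstructedPoint, smul_add, smul_smul]

lemma snd_eq : (reconstructedPoint κ E ρ a β L Θ).2 =
    (a⁻¹ * -(β * κ / ρ)) • Θ + (a⁻¹ * (2 * E + κ / ρ)) • cross L Θ := by
  simp only [reconstructedPoint, smul_add, smul_smul]

lemma norm_fst (hρ : 0 < ρ) (hΘ : ‖Θ‖ = 1) (hperp : dot Θ L = 0) (ha : a ≠ 0)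
    (ha2 : a ^ 2 = κ ^ 2 + 2 * E * ‖L‖ ^ 2)
    (hβ : β ^ 2 = 2 * ρ ^ 2 * E + 2 * κ * ρ - ‖L‖ ^ 2) :
    ‖(reconstructedPoint κ E ρ a β L Θ).1‖ = ρ := by
  refine (sq_eq_sq₀ (norm_nonneg _) hρ.le).mp ?_
  rw [fst_eq, norm_sq_smul_add_smul_cross hΘ hperp]
  field_simp
  linear_combination ‖L‖ ^ 2 * hβ - ρ ^ 2 * ha2

lemma norm_sq_snd (hρ : ρ ≠ 0) (hΘ : ‖Θ‖ = 1) (hperp : dot Θ L = 0) (ha : a ≠ 0)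
    (ha2 : a ^ 2 = κ ^ 2 + 2 * E * ‖L‖ ^ 2)
    (hβ : β ^ 2 = 2 * ρ ^ 2 * E + 2 * κ * ρ - ‖L‖ ^ 2) :
    ‖(reconstructedPoint κ E ρ a β L Θ).2‖ ^ 2 = 2 * E + 2 * κ / ρ := by
  rw [snd_eq, norm_sq_smul_add_smul_cross hΘ hperp]
  field_simp
  linear_combination κ ^ 2 * hβ - (2 * E * ρ ^ 2 + 2 * κ * ρ) * ha2

lemma energy_eq (hρ : 0 < ρ) (hΘ : ‖Θ‖ = 1) (hperp : dot Θ L = 0) (ha : a ≠ 0)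
    (ha2 : a ^ 2 = κ ^ 2 + 2 * E * ‖L‖ ^ 2)
    (hβ : β ^ 2 = 2 * ρ ^ 2 * E + 2 * κ * ρ - ‖L‖ ^ 2) :
    energy κ (reconstructedPoint κ E ρ a β L Θ) = E := by
  rw [energy, norm_fst hρ hΘ hperp ha ha2 hβ, norm_sq_snd hρ.ne' hΘ hperp ha ha2 hβ]
  ring

lemma angMom_eq (hρ : ρ ≠ 0) (hΘ : ‖Θ‖ = 1) (hperp : dot Θ L = 0) (ha : a ≠ 0)
    (ha2 : a ^ 2 = κ ^ 2 + 2 * E * ‖L‖ ^ 2)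
    (hβ : β ^ 2 = 2 * ρ ^ 2 * E + 2 * κ * ρ - ‖L‖ ^ 2) :
    angMom (reconstructedPoint κ E ρ a β L Θ) = L := by
  have hcoeff : a⁻¹ * (‖L‖ ^ 2 - κ * ρ) * (a⁻¹ * (2 * E + κ / ρ))
      - a⁻¹ * β * (a⁻¹ * -(β * κ / ρ)) = 1 := by
    field_simp
    linear_combination κ * hβ - ρ * ha2
  rw [angMom, fst_eq, snd_eq, cross_smul_add_smul, hcoeff,
    cross_cross_right_of_dot_eq_zero hperp, hΘ, one_pow, one_smul, one_smul]

lemma cross_snd_sub_smul_fst (hρ : ρ ≠ 0) (hperp : dot Θ L = 0) (ha : a ≠ 0)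
    (ha2 : a ^ 2 = κ ^ 2 + 2 * E * ‖L‖ ^ 2) :
    cross (reconstructedPoint κ E ρ a β L Θ).2 L
      - (κ / ρ) • (reconstructedPoint κ E ρ a β L Θ).1 = a • Θ := by
  rw [fst_eq, snd_eq, cross_smul_add_smul_cross_left hperp]
  match_scalars
  · field_simp
    linear_combination -ρ * ha2
  · field_simp
    ring

end reconstructedPoint

theorem phase_point_reconstruction_general {κ E ρ a β : ℝ} {L Θ : E3} (hρ : 0 < ρ)
    (hΘ : ‖Θ‖ = 1) (hperp : dot Θ L = 0) (ha : a ≠ 0) (ha2 : a ^ 2 = κ ^ 2 + 2 * E * ‖L‖ ^ 2)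
    (hβ : β ^ 2 = 2 * ρ ^ 2 * E + 2 * κ * ρ - ‖L‖ ^ 2) :
    ‖(reconstructedPoint κ E ρ a β L Θ).1‖ = ρ ∧
    energy κ (reconstructedPoint κ E ρ a β L Θ) = E ∧
    angMom (reconstructedPoint κ E ρ a β L Θ) = L ∧
    cross (reconstructedPoint κ E ρ a β L Θ).2 L - (κ / ‖(reconstructedPoint κ E ρ a β L Θ).1‖) •
      (reconstructedPoint κ E ρ a β L Θ).1 = a • Θ := by
  have hr := reconstructedPoint.norm_fst hρ hΘ hperp ha ha2 hβ
  refine ⟨hr, reconstructedPoint.energy_eq hρ hΘ hperp ha ha2 hβ,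
    reconstructedPoint.angMom_eq hρ.ne' hΘ hperp ha ha2 hβ, ?_⟩
  rw [hr, reconstructedPoint.cross_snd_sub_smul_fst hρ.ne' hperp ha ha2]

/-- Reconstruction of a phase-space point from prescribed radius `ρ`, energy
`E`, angular momentum `L₀`, LRL direction `Θ₀`, and sign `s` of the radial
velocity: the point `(r*, v*)` defined by the stated formulas has radius `ρ`,
energy `E`, angular momentum `L₀`, and LRL vector `a Θ₀` with
`a = √(κ² + 2E‖L₀‖²)`. -/
theorem phase_point_reconstruction (κ : ℝ) (hκ : 0 < κ) (E ρ s : ℝ)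
    (hρ : 0 < ρ) (hs : s = 1 ∨ s = -1) (L₀ Θ₀ : E3)
    (hL₀ : L₀ ≠ 0) (hΘ₀ : ‖Θ₀‖ = 1) (hperp : dot Θ₀ L₀ = 0)
    (hB : 0 ≤ 2 * ρ^2 * E + 2 * κ * ρ - ‖L₀‖^2)
    (ha : 0 < κ^2 + 2 * E * ‖L₀‖^2)
    (a B : ℝ) (hadef : a = Real.sqrt (κ^2 + 2 * E * ‖L₀‖^2))
    (hBdef : B = Real.sqrt (2 * ρ^2 * E + 2 * κ * ρ - ‖L₀‖^2))
    (rs vs : E3)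
    (hrs : rs = a⁻¹ • ((‖L₀‖^2 - κ * ρ) • Θ₀ + (s * B) • cross L₀ Θ₀))
    (hvs : vs = a⁻¹ • ((-(s * κ * B / ρ)) • Θ₀ + (2 * E + κ / ρ) • cross L₀ Θ₀)) :
    ‖rs‖ = ρ ∧
    (1/2) * ‖vs‖^2 - κ / ‖rs‖ = E ∧
    cross rs vs = L₀ ∧
    cross vs L₀ - (κ / ‖rs‖) • rs = a • Θ₀ := by
  have hβ : (s * B) ^ 2 = 2 * ρ ^ 2 * E + 2 * κ * ρ - ‖L₀‖ ^ 2 := by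
    rw [mul_pow, sq_eq_one_iff.mpr hs, one_mul, hBdef, Real.sq_sqrt hB]
  rw [hrs, hvs, mul_right_comm s κ B]
  exact phase_point_reconstruction_general hρ hΘ₀ hperp
    (hadef ▸ (Real.sqrt_pos.mpr ha).ne') (hadef ▸ Real.sq_sqrt ha.le) hβ
end
end
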